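/- arXiv:math/0103019 — 2 statements merged into one kernel-verified Lean document; each statement's English description precedes it below -/
import Mathlib

section
/- Let H be a finitely generated projective Hopf k-algebra with Frobenius homomorphism ψ : H → P and left norm N = Σᵢ Nᵢ ⊗ qᵢ ∈ H ⊗ Q (so that Σᵢ ψ(aNᵢ)qᵢ = ε(a) for all a). Then the module of left integrals in the H-bimodule H ⊗ Q, namely {T : aT = ε(a)T for all a ∈ H}, is freely generated as a k-module by N and is a k-direct summand of H ⊗ Q. -/
open scoped TensorProduct

/-- The convolution product on the dual of a coalgebra: `(g * f)(a) = Σ g(a₍₁₎) f(a₍₂₎)`. -/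
noncomputable def conv (k H : Type*) [CommRing k] [AddCommGroup H] [Module k H]
    [Coalgebra k H] (g f : Module.Dual k H) : Module.Dual k H :=
  LinearMap.mul' k k ∘ₗ TensorProduct.map g f ∘ₗ Coalgebra.comul

/-- The Frobenius homomorphism `ψ : H → P = J*`, `ψ(a)(q) = q(a)`. -/
noncomputable def psiH (k H : Type*) [CommRing k] [Ring H] [HopfAlgebra k H]
    (J : Submodule k (Module.Dual k H)) : H →ₗ[k] Module.Dual k ↥J :=
  (Submodule.subtype J).dualMap ∘ₗ Module.Dual.eval k H

/-- The canonical map `H ⊗ Q → H*` (for `Q = J` the left integrals in `H*`), sending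
`a ⊗ q` to the functional `z ↦ ψ(z a)(q)`. -/
noncomputable def ThetaMap (k H : Type*) [CommRing k] [Ring H] [HopfAlgebra k H]
    (J : Submodule k (Module.Dual k H)) : H ⊗[k] ↥J →ₗ[k] Module.Dual k H :=
  TensorProduct.lift
    (((((LinearMap.llcomp k H (Module.Dual k ↥J) k).comp
          (LinearMap.applyₗ (R := k))).flip).comp
        ((LinearMap.llcomp k H H (Module.Dual k ↥J) (psiH k H J)).comp
          (LinearMap.mul k H).flip)))

/-!
In Sweedler notation, `H*` is a left `H`-module through `(a f)(x) = f(x a)`, and for `q ∈ Q` and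
`a ∈ H` the left integral property of `q` gives

  `x₍₁₎ (a₍₁₎ q(x₍₂₎ a₍₂₎)) = q(x a) 1`,  that is,  `a₍₁₎ q(x a₍₂₎) = S(x₍₁₎) q(x₍₂₎ a)`.

Hence the image `aq` of `a ⊗ q` in `H*` determines the map `x ↦ a₍₁₎ q(x a₍₂₎)`, which is the
element `a₍₁₎ ⊗ a₍₂₎q` of `H ⊗ H* ≅ Hom(H, H)`, and this determines `a ⊗ q` by
`a ⊗ f ↦ a₍₁₎ ⊗ S(a₍₂₎)f`. So `H ⊗ Q → H*` is injective, and left integrals can be compared in `H*`,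
where `aT = ε(a)T` reads `f(x a) = ε(a) f(x)`, which forces `f = f(1) ε`.
-/

open Coalgebra WithConv

section Shear

variable {R C M : Type*} [CommSemiring R] [AddCommMonoid C] [Module R C] [Coalgebra R C]
  [AddCommMonoid M] [Module R M]

/-- The shear map `c ⊗ m ↦ c₍₁₎ ⊗ f(c₍₂₎) m` of `C ⊗ M`. When `f` is the action of a Hopf algebra on
a module, this is the Galois map of the associated Hopf module. -/
noncomputable def shear (f : C →ₗ[R] Module.End R M) : C ⊗[R] M →ₗ[R] C ⊗[R] M :=
  (TensorProduct.lift f).lTensor C ∘ₗ (TensorProduct.assoc R C C M).toLinearMap ∘ₗ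
    comul.rTensor M

lemma shear_tmul {ι : Type*} (f : C →ₗ[R] Module.End R M) {c : C} (r : Repr R c ι) (m : M) :
    shear f (c ⊗ₜ m) = ∑ i ∈ r.index, r.left i ⊗ₜ f (r.right i) m := by
  simp [shear, ← r.eq, TensorProduct.sum_tmul]

lemma shear_convOne : shear (1 : WithConv (C →ₗ[R] Module.End R M)).ofConv = LinearMap.id := by
  ext c m
  have h := congrArg ((LinearMap.toSpanSingleton R M m).lTensor C)
    (sum_tmul_counit_eq (R := R) (ℛ R c))
  simp only [map_sum, LinearMap.lTensor_tmul, LinearMap.toSpanSingleton_apply, one_smul] at h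
  simpa [shear_tmul _ (ℛ R c), LinearMap.convOne_def, -TensorProduct.tmul_smul] using h

lemma shear_convMul (f g : WithConv (C →ₗ[R] Module.End R M)) :
    shear (f * g).ofConv = shear f.ofConv ∘ₗ shear g.ofConv := by
  ext c m
  let r := ℛ R c
  have h := congrArg ((LinearMap.applyₗ m ∘ₗ LinearMap.mul' R (Module.End R M) ∘ₗ
      TensorProduct.map f.ofConv g.ofConv).lTensor C)
    (sum_tmul_tmul_eq r (fun i => ℛ R (r.left i)) (fun i => ℛ R (r.right i)))
  simp only [map_sum, LinearMap.lTensor_tmul, LinearMap.comp_apply, TensorProduct.map_tmul,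
    LinearMap.mul'_apply, LinearMap.applyₗ_apply_apply, Module.End.mul_apply] at h
  simp only [TensorProduct.AlgebraTensorModule.curry_apply, TensorProduct.curry_apply,
    LinearMap.restrictScalars_apply, LinearMap.comp_apply, shear_tmul _ r, map_sum]
  simp only [fun i => shear_tmul f.ofConv (ℛ R (r.left i)), h]
  simp [(ℛ R (r.right _)).convMul_apply, TensorProduct.tmul_sum]

end Shear

section DualAction

variable (k H : Type*) [CommSemiring k] [Semiring H] [Algebra k H]

/-- The left action of `H` on its dual `H*`, `(a f)(x) = f(x a)`, as an algebra homomorphism. -/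
noncomputable def dualAction : H →ₐ[k] Module.End k (Module.Dual k H) :=
  AlgHom.ofLinearMap (Module.Dual.transpose ∘ₗ (LinearMap.mul k H).flip)
    (by ext; simp [Module.Dual.transpose_apply])
    (fun a b => by ext; simp [Module.Dual.transpose_apply, mul_assoc])

variable {k H} in
@[simp]
lemma dualAction_apply (a : H) (f : Module.Dual k H) (x : H) :
    dualAction k H a f x = f (x * a) := rfl

end DualAction

section Bialgebra

variable {k H : Type*} [CommSemiring k] [Semiring H] [Bialgebra k H]

/-- The map `H ⊗ H* → Hom(H, H)` sending `a ⊗ f` to `x ↦ a₍₁₎ f(x a₍₂₎)`: the shear map of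
the action on `H*`, read in `Hom(H, H)` so that it can be convolved with the antipode. -/
noncomputable def shearHom : H ⊗[k] Module.Dual k H →ₗ[k] H →ₗ[k] H :=
  dualTensorHom k H H ∘ₗ (TensorProduct.comm k H (Module.Dual k H)).toLinearMap ∘ₗ
    shear (dualAction k H).toLinearMap

lemma shearHom_tmul_apply {ι : Type*} {a : H} (r : Repr k a ι) (f : Module.Dual k H) (x : H) :
    shearHom (a ⊗ₜ f) x = ∑ i ∈ r.index, f (x * r.right i) • r.left i := by
  simp [shearHom, shear_tmul _ r]

end Bialgebra

section LeftIntegral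

variable {k H : Type*} [CommRing k] [Ring H] [Bialgebra k H]

/-- `q` is a left integral in the convolution algebra `H*`. The augmentation of `H*` is `g ↦ g(1)`,
so the condition is `g * q = g(1) q`. -/
def IsDualLeftIntegral (q : Module.Dual k H) : Prop :=
  ∀ g : Module.Dual k H, conv k H g q = g 1 • q

lemma IsDualLeftIntegral.rid_lTensor_comul [Module.Projective k H] {q : Module.Dual k H}
    (hq : IsDualLeftIntegral q) (x : H) :
    TensorProduct.rid k H (q.lTensor H (comul x)) = q x • 1 := by
  rw [← sub_eq_zero, ← Module.forall_dual_apply_eq_zero_iff k]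
  intro g
  have h := LinearMap.congr_fun (hq g) x
  simp only [conv, LinearMap.comp_apply, ← (ℛ k x).eq, map_sum, TensorProduct.map_tmul,
    LinearMap.mul'_apply, LinearMap.smul_apply, smul_eq_mul] at h
  simp only [← (ℛ k x).eq, map_sub, map_sum, LinearMap.lTensor_tmul, TensorProduct.rid_tmul,
    map_smul, smul_eq_mul]
  simp only [mul_comm (q _), h, sub_self]

lemma IsDualLeftIntegral.id_convMul_shearHom [Module.Projective k H] {q : Module.Dual k H}
    (hq : IsDualLeftIntegral q) (a : H) :
    toConv LinearMap.id * toConv (shearHom (a ⊗ₜ[k] q)) =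
      toConv (Algebra.linearMap k H ∘ₗ dualAction k H a q) := by
  ext x
  have h := hq.rid_lTensor_comul (x * a)
  rw [Bialgebra.comul_mul, ← (ℛ k x).eq, ← (ℛ k a).eq, Finset.sum_mul_sum] at h
  simp only [Algebra.TensorProduct.tmul_mul_tmul, map_sum, LinearMap.lTensor_tmul,
    TensorProduct.rid_tmul] at h
  simpa [(ℛ k x).convMul_apply, shearHom_tmul_apply (ℛ k a), Finset.mul_sum,
    Algebra.algebraMap_eq_smul_one] using h

end LeftIntegral

section HopfAlgebra

variable {k H : Type*} [CommSemiring k] [Semiring H] [HopfAlgebra k H]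

lemma algHom_comp_antipode_convMul {A : Type*} [Semiring A] [Algebra k A] (ρ : H →ₐ[k] A) :
    toConv (ρ.toLinearMap ∘ₗ HopfAlgebra.antipode k) * toConv ρ.toLinearMap = 1 := by
  have h := LinearMap.algHom_comp_convMul_distrib ρ (toConv (HopfAlgebra.antipode k (A := H)))
    (toConv LinearMap.id)
  rw [LinearMap.antipode_mul_id] at h
  refine (congrArg toConv h).symm.trans ?_
  ext x
  simp [LinearMap.convOne_def]

lemma shear_injective {M : Type*} [AddCommMonoid M] [Module k M] (ρ : H →ₐ[k] Module.End k M) :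
    Function.Injective (shear ρ.toLinearMap) := by
  have h := shear_convMul (toConv (ρ.toLinearMap ∘ₗ HopfAlgebra.antipode k))
    (toConv ρ.toLinearMap)
  rw [algHom_comp_antipode_convMul, shear_convOne] at h
  exact Function.LeftInverse.injective
    (g := shear (ρ.toLinearMap ∘ₗ HopfAlgebra.antipode k)) (LinearMap.congr_fun h.symm)

end HopfAlgebra

lemma shearHom_injective {k H : Type*} [CommRing k] [Ring H] [HopfAlgebra k H]
    [Module.Finite k H] [Module.Projective k H] :
    Function.Injective (shearHom (k := k) (H := H)) :=
  (dualTensorHomEquiv k H H).injective.comp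
    ((TensorProduct.comm k H (Module.Dual k H)).injective.comp (shear_injective (dualAction k H)))

namespace ThetaMap

variable {k H : Type*} [CommRing k] [Ring H] [HopfAlgebra k H] {J : Submodule k (Module.Dual k H)}

lemma tmul_eq_dualAction (a : H) (q : J) :
    ThetaMap k H J (a ⊗ₜ q) = dualAction k H a q := rfl

lemma id_convMul_shearHom [Module.Projective k H] (hJ : ∀ q ∈ J, IsDualLeftIntegral q)
    (T : H ⊗[k] J) :
    toConv LinearMap.id * toConv (shearHom (J.subtype.lTensor H T)) =
      toConv (Algebra.linearMap k H ∘ₗ ThetaMap k H J T) := by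
  induction T with
  | zero => simp
  | tmul a q => exact (hJ q q.2).id_convMul_shearHom a
  | add T U hT hU => simp only [map_add, toConv_add, mul_add, LinearMap.comp_add, hT, hU]

lemma injective [Module.Finite k H] [Module.Projective k H]
    (hJ : ∀ q ∈ J, IsDualLeftIntegral q) : Function.Injective (ThetaMap k H J) := by
  rw [injective_iff_map_eq_zero]
  intro T hT
  have h_conv : toConv LinearMap.id * toConv (shearHom (J.subtype.lTensor H T)) = 0 := by
    rw [id_convMul_shearHom hJ, hT, LinearMap.comp_zero, toConv_zero]
  have h_shear : toConv (shearHom (J.subtype.lTensor H T)) = 0 := by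
    rw [← one_mul (toConv _), ← LinearMap.antipode_mul_id, mul_assoc, h_conv, mul_zero]
  have h_subtype : Function.Injective (J.subtype.lTensor H) :=
    Module.Flat.lTensor_preserves_injective_linearMap _ J.injective_subtype
  exact (map_eq_zero_iff _ h_subtype).mp
    ((map_eq_zero_iff _ shearHom_injective).mp (toConv_injective h_shear))

lemma rTensor_mulLeft_apply (a x : H) (T : H ⊗[k] J) :
    ThetaMap k H J ((LinearMap.mulLeft k a).rTensor J T) x = ThetaMap k H J T (x * a) := by
  induction T with
  | zero => simp
  | tmul b q => simp [tmul_eq_dualAction, mul_assoc]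
  | add T U hT hU => simp only [map_add, LinearMap.add_apply, hT, hU]

lemma forall_rTensor_mulLeft_eq_counit_smul_iff (h_inj : Function.Injective (ThetaMap k H J))
    {N : H ⊗[k] J} (hN : ThetaMap k H J N = counit) {T : H ⊗[k] J} :
    (∀ a : H, (LinearMap.mulLeft k a).rTensor J T = counit (R := k) a • T) ↔
      T = ThetaMap k H J T 1 • N := by
  constructor
  · intro hT
    apply h_inj
    ext a
    calc ThetaMap k H J T a = ThetaMap k H J ((LinearMap.mulLeft k a).rTensor J T) 1 := by
          rw [rTensor_mulLeft_apply, one_mul]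
      _ = ThetaMap k H J (ThetaMap k H J T 1 • N) a := by
          simp only [hT, map_smul, hN, LinearMap.smul_apply, smul_eq_mul, mul_comm]
  · intro hT a
    apply h_inj
    ext x
    rw [rTensor_mulLeft_apply, hT]
    simp only [map_smul, hN, LinearMap.smul_apply, smul_eq_mul, Bialgebra.counit_mul]
    ring

end ThetaMap

/-- The space of left integrals in the `H`-bimodule `H ⊗ Q` is freely generated by the
left norm `N` (the preimage of the counit under `H ⊗ Q ≅ H*`) and is a `k`-direct summand
of `H ⊗ Q`. -/
theorem left_norm_generates_integrals (k H : Type*) [CommRing k] [Ring H] [HopfAlgebra k H]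
    [Module.Finite k H] [Module.Projective k H]
    (J : Submodule k (Module.Dual k H))
    (hJ : ↑J = {f : Module.Dual k H | ∀ g : Module.Dual k H, conv k H g f = g 1 • f})
    (N : H ⊗[k] ↥J)
    (hN : ThetaMap k H J N = Coalgebra.counit (R := k)) :
    (∀ a : H, (LinearMap.rTensor ↥J (LinearMap.mulLeft k a)) N
        = Coalgebra.counit (R := k) a • N) ∧
    (∀ T : H ⊗[k] ↥J,
      (∀ a : H, (LinearMap.rTensor ↥J (LinearMap.mulLeft k a)) T
          = Coalgebra.counit (R := k) a • T) → ∃! c : k, T = c • N) ∧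
    (∃ π : H ⊗[k] ↥J →ₗ[k] H ⊗[k] ↥J,
      (∀ T : H ⊗[k] ↥J,
        (∀ a : H, (LinearMap.rTensor ↥J (LinearMap.mulLeft k a)) T
            = Coalgebra.counit (R := k) a • T) → π T = T) ∧
      (∀ (x : H ⊗[k] ↥J) (a : H),
        (LinearMap.rTensor ↥J (LinearMap.mulLeft k a)) (π x)
          = Coalgebra.counit (R := k) a • π x)) := by
  have h_inj : Function.Injective (ThetaMap k H J) :=
    ThetaMap.injective fun q hq => (Set.ext_iff.mp hJ q).mp hq
  have h_integral (T : H ⊗[k] ↥J) :=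
    ThetaMap.forall_rTensor_mulLeft_eq_counit_smul_iff h_inj hN (T := T)
  have hN_one (c : k) : ThetaMap k H J (c • N) 1 = c := by simp [hN]
  have h_smul (c : k) : ∀ a : H, (LinearMap.mulLeft k a).rTensor J (c • N)
      = Coalgebra.counit (R := k) a • c • N := (h_integral (c • N)).mpr (by rw [hN_one])
  refine ⟨fun a => by simpa using h_smul 1 a, fun T hT => ?_, ?_⟩
  · exact ⟨ThetaMap k H J T 1, (h_integral T).mp hT, fun c hc => by rw [hc, hN_one]⟩
  · refine ⟨LinearMap.toSpanSingleton k _ N ∘ₗ LinearMap.applyₗ 1 ∘ₗ ThetaMap k H J, ?_, ?_⟩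
    · exact fun T hT => ((h_integral T).mp hT).symm
    · exact fun T => h_smul (ThetaMap k H J T 1)
end

section
/- Radford's formula: If H is a finitely generated projective Hopf algebra over a commutative ring k, with left distinguished group-like elements b ∈ H and m ∈ H*, then S⁴(a) = b⁻¹ (m ⇀ a ↼ m⁻¹) b for every a ∈ H. -/
open scoped TensorProduct

/-!
The left integral property of `ψ` makes `· ↼ f` and `· ↼ (f ∘ S)` adjoint for the pairing
`(x, y) ↦ ψ (x y)`, and the modular element `b` makes `f ⇀ ·` adjoint to `(f ∘ T) ⇀ ·`, where
`T = b S(·)`. Since `ν` swaps the two arguments of the pairing, using each adjunction twice gives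
`ν y ↼ (f ∘ S²) = ν (y ↼ f)` and `f ⇀ ν y = ν ((f ∘ T²) ⇀ y)`. Applying the counit turns these into
`S² (ν y) = m ⇀ y` and `ν y = T² (y ↼ m) = b S² (y ↼ m) b⁻¹`. Eliminating `ν` gives
`m ⇀ y = b S⁴ (y ↼ m) b⁻¹`, which is Radford's formula at `a = y ↼ m`.
-/

section RadfordFormula

open Coalgebra HopfAlgebra LinearMap TensorProduct

variable {k C P : Type*} [CommSemiring k] [AddCommMonoid C] [Module k C] [Coalgebra k C]
  [AddCommMonoid P] [Module k P]

/-- The left action `f ⇀ a = Σ a₍₁₎ f(a₍₂₎)` of the convolution algebra `C*` on `C`. -/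
noncomputable def leftHit (f : Module.Dual k C) : C →ₗ[k] C :=
  (TensorProduct.rid k C).toLinearMap ∘ₗ f.lTensor C ∘ₗ comul

/-- The right action `a ↼ f = Σ f(a₍₁₎) a₍₂₎` of the convolution algebra `C*` on `C`, as a linear
map in `a`. -/
noncomputable def rightHit (f : Module.Dual k C) : C →ₗ[k] C :=
  (TensorProduct.lid k C).toLinearMap ∘ₗ f.rTensor C ∘ₗ comul

local notation:75 f:76 "⇀" a:75 => leftHit f a

local notation:75 a:75 "↼" f:76 => rightHit f a

lemma leftHit_eq_sum {ι : Type*} (f : Module.Dual k C) {a : C} (repr : Repr k a ι) :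
    f ⇀ a = ∑ i ∈ repr.index, f (repr.right i) • repr.left i := by
  simp [leftHit, ← repr.eq]

lemma rightHit_eq_sum {ι : Type*} (f : Module.Dual k C) {a : C} (repr : Repr k a ι) :
    a ↼ f = ∑ i ∈ repr.index, f (repr.left i) • repr.right i := by
  simp [rightHit, ← repr.eq]

lemma apply_leftHit (f g : Module.Dual k C) (a : C) : g (f ⇀ a) = f (a ↼ g) := by
  simp [leftHit_eq_sum f (ℛ k a), rightHit_eq_sum g (ℛ k a), mul_comm]

lemma leftHit_counit (a : C) : counit (R := k) ⇀ a = a := by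
  simp [leftHit]

lemma rightHit_counit (a : C) : a ↼ counit (R := k) = a := by
  simp [rightHit]

lemma counit_leftHit (f : Module.Dual k C) (a : C) : counit (R := k) (f ⇀ a) = f a := by
  rw [apply_leftHit, rightHit_counit]

lemma counit_rightHit (f : Module.Dual k C) (a : C) : counit (R := k) (a ↼ f) = f a := by
  rw [← apply_leftHit, leftHit_counit]

lemma comul_rightHit (f : Module.Dual k C) (a : C) :
    comul (a ↼ f) = (rightHit f).rTensor C (comul (R := k) a) := by
  have hcomul : comul ∘ₗ (TensorProduct.lid k C).toLinearMap ∘ₗ f.rTensor C =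
      (TensorProduct.lid k (C ⊗[k] C)).toLinearMap ∘ₗ f.rTensor (C ⊗[k] C) ∘ₗ
        comul.lTensor C := by
    ext; simp
  have hassoc : (TensorProduct.lid k (C ⊗[k] C)).toLinearMap ∘ₗ f.rTensor (C ⊗[k] C) ∘ₗ
        (TensorProduct.assoc k C C C).toLinearMap =
      ((TensorProduct.lid k C).toLinearMap ∘ₗ f.rTensor C).rTensor C := by
    ext; simp [TensorProduct.smul_tmul']
  calc comul (a ↼ f)
      = TensorProduct.lid k (C ⊗[k] C) (f.rTensor (C ⊗[k] C) (comul.lTensor C (comul a))) :=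
        LinearMap.congr_fun hcomul (comul a)
    _ = (rightHit f).rTensor C (comul a) := by
        rw [← coassoc_apply, rightHit, ← comp_assoc, rTensor_comp_apply]
        exact LinearMap.congr_fun hassoc (comul.rTensor C (comul a))

lemma rightHit_rightHit (f g : Module.Dual k C) (a : C) :
    (a ↼ f) ↼ g = a ↼ (g ∘ₗ rightHit f) := by
  rw [rightHit, comp_apply, comp_apply, comul_rightHit, ← rTensor_comp_apply]
  rfl

lemma leftHit_rightHit (f g : Module.Dual k C) (a : C) : f ⇀ (a ↼ g) = (f ⇀ a) ↼ g := by
  have natural : (TensorProduct.rid k C).toLinearMap ∘ₗ f.lTensor C ∘ₗ (rightHit g).rTensor C =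
      rightHit g ∘ₗ (TensorProduct.rid k C).toLinearMap ∘ₗ f.lTensor C := by
    ext; simp
  rw [leftHit, comp_apply, comp_apply, comul_rightHit]
  exact LinearMap.congr_fun natural (comul a)

/-- `b` is the left modular function of `C*` attached to the integral `ψ`: `ψ * f = f(b) ψ` for all
`f ∈ C*`. -/
def IsModularElement (ψ : C →ₗ[k] P) (b : C) : Prop :=
  ∀ (f : Module.Dual k C) (x : C), ψ (f ⇀ x) = f b • ψ x

lemma IsModularElement.of_map_comul {ψ : C →ₗ[k] P} {b : C}
    (h : ∀ (f : Module.Dual k C) (x : C),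
      TensorProduct.rid k P (TensorProduct.map ψ f (comul (R := k) x)) = f b • ψ x) :
    IsModularElement ψ b := by
  intro f x
  have natural : ψ ∘ₗ (TensorProduct.rid k C).toLinearMap ∘ₗ f.lTensor C =
      (TensorProduct.rid k P).toLinearMap ∘ₗ TensorProduct.map ψ f := by
    ext; simp
  exact (LinearMap.congr_fun natural (comul x)).trans (h f x)

section Algebra

variable {A : Type*} [Semiring A] [Algebra k A]

lemma lid_rTensor_tmul_one_mul (f : Module.Dual k A) (c : A) (t : A ⊗[k] A) :
    TensorProduct.lid k A (f.rTensor A ((c ⊗ₜ[k] (1 : A)) * t)) =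
      TensorProduct.lid k A ((f ∘ₗ mulLeft k c).rTensor A t) := by
  induction t with
  | zero => simp
  | tmul u v => simp
  | add s t hs ht => simp only [mul_add, map_add, hs, ht]

lemma lid_rTensor_one_tmul_mul (f : Module.Dual k A) (c : A) (t : A ⊗[k] A) :
    TensorProduct.lid k A (f.rTensor A (((1 : A) ⊗ₜ[k] c) * t)) =
      c * TensorProduct.lid k A (f.rTensor A t) := by
  induction t with
  | zero => simp
  | tmul u v => simp
  | add s t hs ht => simp only [mul_add, map_add, hs, ht]

lemma rid_lTensor_mul_one_tmul (f : Module.Dual k A) (c : A) (t : A ⊗[k] A) :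
    TensorProduct.rid k A (f.lTensor A (t * ((1 : A) ⊗ₜ[k] c))) =
      TensorProduct.rid k A ((f ∘ₗ mulRight k c).lTensor A t) := by
  induction t with
  | zero => simp
  | tmul u v => simp
  | add s t hs ht => simp only [add_mul, map_add, hs, ht]

lemma rid_lTensor_mul_tmul_one (f : Module.Dual k A) (c : A) (t : A ⊗[k] A) :
    TensorProduct.rid k A (f.lTensor A (t * (c ⊗ₜ[k] (1 : A)))) =
      TensorProduct.rid k A (f.lTensor A t) * c := by
  induction t with
  | zero => simp
  | tmul u v => simp
  | add s t hs ht => simp only [add_mul, map_add, hs, ht]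

/-- `ν` is the Nakayama automorphism of the Frobenius homomorphism `ψ`. Frobenius structures ask
for `a ↦ ψ(- a)` to be bijective; injectivity alone also covers co-Frobenius Hopf algebras of
infinite rank. -/
structure IsNakayama (ψ : A →ₗ[k] P) (ν : A ≃ₐ[k] A) : Prop where
  injective : Function.Injective fun a : A ↦ ψ ∘ₗ mulRight k a
  apply_mul (x a : A) : ψ (x * a) = ψ (ν a * x)

lemma IsNakayama.eq_of_forall_apply_mul_eq {ψ : A →ₗ[k] P} {ν : A ≃ₐ[k] A}
    (hν : IsNakayama ψ ν) {u v : A} (h : ∀ x, ψ (u * x) = ψ (v * x)) : u = v := by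
  have apply_mul_symm (x w : A) : ψ (x * ν.symm w) = ψ (w * x) := by
    rw [hν.apply_mul, ν.apply_symm_apply]
  refine ν.symm.injective (hν.injective (LinearMap.ext fun x ↦ ?_))
  calc ψ (x * ν.symm u) = ψ (u * x) := apply_mul_symm x u
    _ = ψ (v * x) := h x
    _ = ψ (x * ν.symm v) := (apply_mul_symm x v).symm

end Algebra

section Bialgebra

variable {B : Type*} [Semiring B] [Bialgebra k B]

/-- `ψ` is a left integral on `B` with values in `P`: `f * ψ = f(1) ψ` for all `f ∈ B*`. -/
def IsLeftIntegral (ψ : B →ₗ[k] P) : Prop :=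
  ∀ (f : Module.Dual k B) (x : B), ψ (x ↼ f) = f 1 • ψ x

lemma IsLeftIntegral.of_lTensor_comul {ψ : B →ₗ[k] P}
    (h : ∀ x : B, ψ.lTensor B (comul (R := k) x) = 1 ⊗ₜ[k] ψ x) : IsLeftIntegral ψ := by
  intro f x
  have natural : ψ ∘ₗ (TensorProduct.lid k B).toLinearMap ∘ₗ f.rTensor B =
      (TensorProduct.lid k P).toLinearMap ∘ₗ f.rTensor P ∘ₗ ψ.lTensor B := by
    ext; simp
  calc ψ (x ↼ f) = TensorProduct.lid k P (f.rTensor P (ψ.lTensor B (comul x))) :=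
        LinearMap.congr_fun natural (comul x)
    _ = f 1 • ψ x := by rw [h, rTensor_tmul, TensorProduct.lid_tmul]

/-- The left modular function `m = ε ∘ ν` of `B`, where `ν` is a Nakayama automorphism. -/
noncomputable def modularFunction (ν : B ≃ₐ[k] B) : B →ₐ[k] k :=
  (Bialgebra.counitAlgHom k B).comp ν

end Bialgebra

section HopfAlgebra

variable {H : Type*} [Semiring H] [HopfAlgebra k H]

lemma sum_antipode_tmul_one_mul_comul {ι : Type*} {x : H} (repr : Repr k x ι) :
    ∑ i ∈ repr.index, (antipode k (repr.left i) ⊗ₜ[k] (1 : H)) * comul (repr.right i) =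
      1 ⊗ₜ[k] x := by
  have hmul (u : H) (t : H ⊗[k] H) : (antipode k u ⊗ₜ[k] (1 : H)) * t =
      (mul' k H ∘ₗ (antipode k).rTensor H).rTensor H
        ((TensorProduct.assoc k H H H).symm (u ⊗ₜ t)) := by
    induction t with
    | zero => simp
    | tmul v w => simp
    | add s t hs ht => simp only [mul_add, tmul_add, map_add, hs, ht]
  calc ∑ i ∈ repr.index, (antipode k (repr.left i) ⊗ₜ[k] (1 : H)) * comul (repr.right i)
      = (mul' k H ∘ₗ (antipode k).rTensor H).rTensor H
          ((TensorProduct.assoc k H H H).symm (comul.lTensor H (comul x))) := by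
        simp only [hmul, ← repr.eq, map_sum, lTensor_tmul]
    _ = (Algebra.linearMap k H).rTensor H (counit.rTensor H (comul x)) := by
        rw [coassoc_symm_apply, ← rTensor_comp_apply, comp_assoc, mul_antipode_rTensor_comul,
          rTensor_comp_apply]
    _ = 1 ⊗ₜ[k] x := by simp

lemma sum_comul_mul_one_tmul_antipode {ι : Type*} {x : H} (repr : Repr k x ι) :
    ∑ i ∈ repr.index, comul (repr.left i) * ((1 : H) ⊗ₜ[k] antipode k (repr.right i)) =
      x ⊗ₜ[k] 1 := by
  have hmul (t : H ⊗[k] H) (w : H) : t * ((1 : H) ⊗ₜ[k] antipode k w) =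
      (mul' k H ∘ₗ (antipode k).lTensor H).lTensor H
        (TensorProduct.assoc k H H H (t ⊗ₜ w)) := by
    induction t with
    | zero => simp
    | tmul u v => simp
    | add s t hs ht => simp only [add_mul, add_tmul, map_add, hs, ht]
  calc ∑ i ∈ repr.index, comul (repr.left i) * ((1 : H) ⊗ₜ[k] antipode k (repr.right i))
      = (mul' k H ∘ₗ (antipode k).lTensor H).lTensor H
          (TensorProduct.assoc k H H H (comul.rTensor H (comul x))) := by
        simp only [hmul, ← repr.eq, map_sum, rTensor_tmul]
    _ = (Algebra.linearMap k H).lTensor H (counit.lTensor H (comul x)) := by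
        rw [coassoc_apply, ← lTensor_comp_apply, comp_assoc, mul_antipode_lTensor_comul,
          lTensor_comp_apply]
    _ = x ⊗ₜ[k] 1 := by simp

lemma sum_rightHit_mul {ι : Type*} (f : Module.Dual k H) {x : H} (repr : Repr k x ι) (y : H) :
    ∑ i ∈ repr.index, (repr.right i * y) ↼ (f ∘ₗ mulLeft k (antipode k (repr.left i))) =
      x * (y ↼ f) := by
  calc ∑ i ∈ repr.index, (repr.right i * y) ↼ (f ∘ₗ mulLeft k (antipode k (repr.left i)))
      = ∑ i ∈ repr.index, TensorProduct.lid k H (f.rTensor H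
          ((antipode k (repr.left i) ⊗ₜ[k] (1 : H)) * comul (repr.right i * y))) := by
        simp only [lid_rTensor_tmul_one_mul, rightHit, comp_apply, LinearEquiv.coe_coe]
    _ = TensorProduct.lid k H (f.rTensor H (((1 : H) ⊗ₜ[k] x) * comul y)) := by
        simp only [Bialgebra.comul_mul, ← mul_assoc, ← map_sum, ← Finset.sum_mul,
          sum_antipode_tmul_one_mul_comul]
    _ = x * (y ↼ f) := lid_rTensor_one_tmul_mul f x (comul y)

lemma sum_leftHit_mul {ι : Type*} (f : Module.Dual k H) (x : H) {y : H} (repr : Repr k y ι) :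
    ∑ i ∈ repr.index, (f ∘ₗ mulRight k (antipode k (repr.right i))) ⇀ (x * repr.left i) =
      (f ⇀ x) * y := by
  calc ∑ i ∈ repr.index, (f ∘ₗ mulRight k (antipode k (repr.right i))) ⇀ (x * repr.left i)
      = ∑ i ∈ repr.index, TensorProduct.rid k H (f.lTensor H
          (comul (x * repr.left i) * ((1 : H) ⊗ₜ[k] antipode k (repr.right i)))) := by
        simp only [rid_lTensor_mul_one_tmul, leftHit, comp_apply, LinearEquiv.coe_coe]
    _ = TensorProduct.rid k H (f.lTensor H (comul x * (y ⊗ₜ[k] (1 : H)))) := by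
        simp only [Bialgebra.comul_mul, mul_assoc, ← map_sum, ← Finset.mul_sum,
          sum_comul_mul_one_tmul_antipode]
    _ = (f ⇀ x) * y := rid_lTensor_mul_tmul_one f y (comul x)

lemma IsLeftIntegral.apply_mul_rightHit {ψ : H →ₗ[k] P} (hψ : IsLeftIntegral ψ)
    (f : Module.Dual k H) (x y : H) :
    ψ (x * (y ↼ f)) = ψ ((x ↼ (f ∘ₗ antipode k)) * y) := by
  rw [← sum_rightHit_mul f (ℛ k x), rightHit_eq_sum _ (ℛ k x)]
  simp only [Finset.sum_mul, map_sum, smul_mul_assoc, map_smul, hψ _ _, comp_apply,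
    mulLeft_apply, mul_one]

lemma IsModularElement.apply_leftHit_mul {ψ : H →ₗ[k] P} {b : H} (hb : IsModularElement ψ b)
    (f : Module.Dual k H) (x y : H) :
    ψ ((f ⇀ x) * y) = ψ (x * ((f ∘ₗ mulLeft k b ∘ₗ antipode k) ⇀ y)) := by
  rw [← sum_leftHit_mul f x (ℛ k y), leftHit_eq_sum _ (ℛ k y)]
  simp only [Finset.mul_sum, map_sum, mul_smul_comm, map_smul, hb _ _, comp_apply,
    mulLeft_apply, mulRight_apply]

namespace IsNakayama

variable {ψ : H →ₗ[k] P} {ν : H ≃ₐ[k] H} {b : H}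

lemma rightHit_apply (hν : IsNakayama ψ ν) (hψ : IsLeftIntegral ψ) (f : Module.Dual k H) (y : H) :
    ν y ↼ (f ∘ₗ antipode k ∘ₗ antipode k) = ν (y ↼ f) := by
  refine hν.eq_of_forall_apply_mul_eq fun x ↦ ?_
  calc ψ ((ν y ↼ (f ∘ₗ antipode k ∘ₗ antipode k)) * x)
      = ψ (ν y * (x ↼ (f ∘ₗ antipode k))) := (hψ.apply_mul_rightHit (f ∘ₗ antipode k) (ν y) x).symm
    _ = ψ ((x ↼ (f ∘ₗ antipode k)) * y) := (hν.apply_mul _ y).symm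
    _ = ψ (x * (y ↼ f)) := (hψ.apply_mul_rightHit f x y).symm
    _ = ψ (ν (y ↼ f) * x) := hν.apply_mul x _

lemma leftHit_apply (hν : IsNakayama ψ ν) (hb : IsModularElement ψ b) (f : Module.Dual k H)
    (y : H) :
    f ⇀ ν y =
      ν ((f ∘ₗ (mulLeft k b ∘ₗ antipode k) ∘ₗ (mulLeft k b ∘ₗ antipode k)) ⇀ y) := by
  set T : H →ₗ[k] H := mulLeft k b ∘ₗ antipode k
  refine hν.eq_of_forall_apply_mul_eq fun x ↦ ?_
  calc ψ ((f ⇀ ν y) * x) = ψ (ν y * ((f ∘ₗ T) ⇀ x)) := hb.apply_leftHit_mul f (ν y) x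
    _ = ψ (((f ∘ₗ T) ⇀ x) * y) := (hν.apply_mul _ y).symm
    _ = ψ (x * ((f ∘ₗ T ∘ₗ T) ⇀ y)) := hb.apply_leftHit_mul _ x y
    _ = ψ (ν ((f ∘ₗ T ∘ₗ T) ⇀ y) * x) := hν.apply_mul x _

lemma antipode_antipode_apply (hν : IsNakayama ψ ν)
    (hH : Function.Injective (Module.Dual.eval k H)) (hψ : IsLeftIntegral ψ) (y : H) :
    antipode k (antipode k (ν y)) = (modularFunction ν).toLinearMap ⇀ y := by
  refine hH (LinearMap.ext fun f ↦ ?_)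
  calc f (antipode k (antipode k (ν y)))
      = counit (R := k) (ν y ↼ (f ∘ₗ antipode k ∘ₗ antipode k)) :=
        (counit_rightHit (f ∘ₗ antipode k ∘ₗ antipode k) (ν y)).symm
    _ = modularFunction ν (y ↼ f) := congrArg counit (hν.rightHit_apply hψ f y)
    _ = f ((modularFunction ν).toLinearMap ⇀ y) :=
        (apply_leftHit (modularFunction ν).toLinearMap f y).symm

lemma apply_eq_mul_antipode (hν : IsNakayama ψ ν)
    (hH : Function.Injective (Module.Dual.eval k H)) (hb : IsModularElement ψ b) (y : H) :
    ν y = b * antipode k (b * antipode k (y ↼ (modularFunction ν).toLinearMap)) := by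
  set T : H →ₗ[k] H := mulLeft k b ∘ₗ antipode k
  refine hH (LinearMap.ext fun f ↦ ?_)
  calc f (ν y) = counit (R := k) (f ⇀ ν y) := (counit_leftHit f _).symm
    _ = modularFunction ν ((f ∘ₗ T ∘ₗ T) ⇀ y) := congrArg counit (hν.leftHit_apply hb f y)
    _ = f (T (T (y ↼ (modularFunction ν).toLinearMap))) :=
        apply_leftHit _ (modularFunction ν).toLinearMap y

end IsNakayama

lemma rightHit_antipode_rightHit (f : H →ₐ[k] k) (a : H) :
    (a ↼ (f.toLinearMap ∘ₗ antipode k)) ↼ f.toLinearMap = a := by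
  have hf : f.toLinearMap ∘ₗ rightHit (f.toLinearMap ∘ₗ antipode k) = counit := by
    ext x
    calc f (x ↼ (f.toLinearMap ∘ₗ antipode k))
        = f (∑ i ∈ (ℛ k x).index, antipode k ((ℛ k x).left i) * (ℛ k x).right i) := by
          simp [rightHit_eq_sum _ (ℛ k x)]
      _ = counit x := by simp [sum_antipode_mul_eq_algebraMap_counit]
  rw [rightHit_rightHit, hf, rightHit_counit]

lemma modularFunction_leftHit {ψ : H →ₗ[k] P} {ν : H ≃ₐ[k] H} {b : Hˣ}
    (hH : Function.Injective (Module.Dual.eval k H)) (hψ : IsLeftIntegral ψ)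
    (hν : IsNakayama ψ ν) (hbg : IsGroupLikeElem k (b : H)) (hb : IsModularElement ψ (b : H))
    (y : H) :
    (modularFunction ν).toLinearMap ⇀ y =
      b * antipode k (antipode k (antipode k (antipode k
        (y ↼ (modularFunction ν).toLinearMap)))) * ↑b⁻¹ := by
  have hSb : antipode k (b : H) = ↑b⁻¹ :=
    (Units.inv_eq_of_mul_eq_one_left hbg.antipode_mul_cancel).symm
  have hSb_inv : antipode k (↑b⁻¹ : H) = b := by rw [← hSb, hbg.antipode_antipode]
  rw [← hν.antipode_antipode_apply hH hψ, hν.apply_eq_mul_antipode hH hb]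
  simp only [antipode_mul_antidistrib, hSb, hSb_inv, mul_assoc]

theorem radford_formula_general {ψ : H →ₗ[k] P} {ν : H ≃ₐ[k] H} {b : Hˣ}
    (hH : Function.Injective (Module.Dual.eval k H)) (hψ : IsLeftIntegral ψ)
    (hν : IsNakayama ψ ν) (hbg : IsGroupLikeElem k (b : H)) (hb : IsModularElement ψ (b : H))
    (a : H) :
    antipode k (antipode k (antipode k (antipode k a))) =
      ↑b⁻¹ * (((modularFunction ν).toLinearMap ⇀ a) ↼
        ((modularFunction ν).toLinearMap ∘ₗ antipode k)) * b := by
  rw [← leftHit_rightHit, modularFunction_leftHit hH hψ hν hbg hb, rightHit_antipode_rightHit]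
  simp [mul_assoc]

end HopfAlgebra

end RadfordFormula

/-- Radford's formula for a finitely generated projective Hopf algebra `H` over a
commutative ring `k`. Here `ψ : H → P` is the Frobenius homomorphism of the `P`-Frobenius
structure of `H` (left-integral-like), `ν` its Nakayama automorphism, `m = ε ∘ ν ∈ H*` the
left modular function of `H`, and `b ∈ H` the left distinguished group-like element of
`H`, characterized by `ψ·f = f(b) ψ` for all `f ∈ H*` (that is,
`Σ ψ(x₍₁₎) f(x₍₂₎) = f(b) ψ(x)`). Then `S⁴(a) = b⁻¹ (m ⇀ a ↼ m⁻¹) b`, where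
`m ⇀ a = Σ a₍₁₎ m(a₍₂₎)`, `a ↼ m⁻¹ = Σ m(S(a₍₁₎)) a₍₂₎` (`m⁻¹ = m ∘ S`). -/
theorem radford_formula (k H P : Type*) [CommRing k] [Ring H] [HopfAlgebra k H]
    [Module.Finite k H] [Module.Projective k H]
    [AddCommGroup P] [Module k P]
    (ψ : H →ₗ[k] P)
    (hFrob : Function.Bijective (fun a : H => ψ ∘ₗ LinearMap.mulRight k a))
    (hint : ∀ a : H, (LinearMap.lTensor H ψ) (Coalgebra.comul (R := k) a) = 1 ⊗ₜ[k] ψ a)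
    (ν : H ≃ₐ[k] H)
    (hν : ∀ x a : H, ψ (x * a) = ψ (ν a * x))
    (b : Hˣ)
    (hbg : Coalgebra.comul (R := k) (↑b : H) = (↑b : H) ⊗ₜ[k] (↑b : H))
    (hbc : Coalgebra.counit (R := k) (↑b : H) = 1)
    (hb : ∀ (f : Module.Dual k H) (x : H),
      (TensorProduct.rid k P) ((TensorProduct.map ψ f) (Coalgebra.comul (R := k) x))
        = f ↑b • ψ x)
    (a : H) :
    HopfAlgebra.antipode (R := k) (HopfAlgebra.antipode (R := k)
        (HopfAlgebra.antipode (R := k) (HopfAlgebra.antipode (R := k) a)))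
      = ↑b⁻¹ *
        ((TensorProduct.lid k H)
          ((LinearMap.rTensor H
              ((Coalgebra.counit (R := k) ∘ₗ ν.toLinearMap) ∘ₗ HopfAlgebra.antipode (R := k)))
            (Coalgebra.comul (R := k)
              ((TensorProduct.rid k H)
                ((LinearMap.lTensor H (Coalgebra.counit (R := k) ∘ₗ ν.toLinearMap))
                  (Coalgebra.comul (R := k) a)))))) * ↑b :=
  radford_formula_general (Module.eval_apply_injective k) (.of_lTensor_comul hint)
    ⟨hFrob.injective, hν⟩ ⟨hbc, hbg⟩ (.of_map_comul hb) a
end
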